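/- Let m ≥ 1, l ≥ 1, L ≥ 1 and nonnegative integers a_1,…,a_m with a_m ≥ a_k for all k ∈ [m] be given, and set i = l·m and K = l·(Σ_{k=1}^{m} a_k) + (i−1)L + 1. Then the optimal broadcast rate R* of the tilde-((a_m,…,a_1)×l)_L-ICP satisfies Σ_{t=1}^{m} (a_t + 1) ≤ R* ≤ (1/l)·min{ 2(K−(i−1)L) + i − 2 − a_m , K }. -/

import Mathlib

open Finset

/-- `<m>_n`: the unique element of `{1,…,n}` congruent to `m` modulo `n`. -/
def angMod (m : ℤ) (n : ℕ) : ℕ :=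
  if m % (n : ℤ) = 0 then n else (m % (n : ℤ)).toNat

/-- Message indices of the tilde-ICP: pairs in `[K] × [m]`. -/
abbrev Msg (K m : ℕ) : Type :=
  {p : ℕ × ℕ // p.1 ∈ Finset.Icc 1 K ∧ p.2 ∈ Finset.Icc 1 m}

/-- Users: elements of `[K]`. -/
abbrev User (K : ℕ) : Type := {k : ℕ // k ∈ Finset.Icc 1 K}

/-- The side-information index set of user `k` in the
tilde-`((a_m,…,a_1)×l)_L`-ICP (here `i = l·m`): the pairs `(b,t)` with
`t ∈ [m]`, `v ∈ [i−1]`, `r ∈ [L]`, and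
`b = <k + Σ_{j=1}^{v} a_{<m+t−j>_m} + (v−1)L + r>_K`. -/
def knownIdxT (K m i L : ℕ) (a : ℕ → ℕ) (k : ℕ) : Set (ℕ × ℕ) :=
  {p | ∃ t ∈ Finset.Icc 1 m, ∃ v ∈ Finset.Icc 1 (i - 1), ∃ r ∈ Finset.Icc 1 L,
    p.2 = t ∧
    p.1 = angMod ((k : ℤ) + (∑ j ∈ Finset.Icc 1 v, (a (angMod ((m : ℤ) + (t : ℤ) - (j : ℤ)) m) : ℤ))
        + ((v : ℤ) - 1) * (L : ℤ) + (r : ℤ)) K}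

/-- Want set of user `u` in the tilde-ICP: the messages `(u,t)`, `t ∈ [m]`. -/
def tildeWant (K m : ℕ) (u : User K) : Set (Msg K m) :=
  {p | p.1.1 = u.1}

/-- Known set of user `u` in the tilde-ICP. -/
def tildeKnown (K m i L : ℕ) (a : ℕ → ℕ) (u : User K) : Set (Msg K m) :=
  {p | p.1 ∈ knownIdxT K m i L a u.1}

/-- A valid index code of length `ℓ` for message length `t`. -/
def ValidCode {I U : Type} (W Kn : U → Set I) (t ℓ : ℕ) : Prop :=
  ∃ E : (I → Fin t → Bool) → Fin ℓ → Bool,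
  ∃ D : ∀ u : U, (Fin ℓ → Bool) → (↥(Kn u) → Fin t → Bool) → (↥(W u) → Fin t → Bool),
    ∀ x : I → Fin t → Bool, ∀ u : U,
      D u (E x) (fun m => x m.1) = fun m => x m.1

/-- The optimal broadcast rate of an index coding problem. -/
noncomputable def optRate {I U : Type} (W Kn : U → Set I) : ℝ :=
  sInf {ρ : ℝ | ∃ t ℓ : ℕ, 1 ≤ t ∧ ValidCode W Kn t ℓ ∧ ρ = (ℓ : ℝ) / (t : ℝ)}

/-!
Extend `a` to an `m`-periodic sequence and cut the line into consecutive blocks, the `n`-th one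
made of `L` points followed by a gap of `a_n` points; a shift by `i` blocks is a shift by
`K + L - 1` points. For any `s ≡ t` modulo `m` with `s ≥ i`, user `k` knows the message `(b, t)`
exactly when, modulo `K`, the point at distance `k - b` from the end of block `s - 1` is among the
`L` first points of one of the blocks `s - i + 1, …, s - 1`.

Lower bound: the messages `(b, t)` with `K - a_t ≤ b ≤ K` form an acyclic set, since among them
user `b` only knows messages of users after `b`; the rate is at least their number.

Upper bound: split each message into `l` symbols, so that the `i` pairs (`t`, symbol number)
correspond to the indices `s` of a window of length `i`, and transmit the first `N` power sums of
the symbols at nodes labelled by `ZMod K`, the symbols of `(b, t)` with index `s` at the end of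
block `s - 1` minus `b`. The labels of the wanted symbols are not shared with other unknown
symbols, so a user decodes as soon as at most `N` labels occur among the unknown symbols. All `K`
labels always suffice; and only the block ends and the gap points of the window can be unknown,
which leaves out the gap `a_c` at its left end.
-/

section IndexCoding

variable {I U : Type} {W Kn : U → Set I}

/-- Zero-error decodability of an encoder `E` over arbitrary alphabets: two message realizations
with the same codeword that agree on what user `u` knows also agree on what `u` wants. -/
def Resolves {X Y : Type*} (W Kn : U → Set I) (E : (I → X) → Y) : Prop :=
  ∀ u x x', E x = E x' → (∀ μ ∈ Kn u, x μ = x' μ) → ∀ μ ∈ W u, x μ = x' μ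

theorem validCode_iff_exists_resolves {t ℓ : ℕ} :
    ValidCode W Kn t ℓ ↔ ∃ E : (I → Fin t → Bool) → Fin ℓ → Bool, Resolves W Kn E := by
  classical
  constructor
  · rintro ⟨E, D, hD⟩
    refine ⟨E, fun u x x' hE hKn μ hμ => ?_⟩
    have hside : (fun ν : Kn u => x ν.1) = fun ν => x' ν.1 := funext fun ν => hKn ν.1 ν.2
    have hdec := hD x u
    rw [hE, hside, hD x' u] at hdec
    exact (congrFun hdec ⟨μ, hμ⟩).symm
  · rintro ⟨E, hE⟩
    refine ⟨E, fun u y k => if h : ∃ x, E x = y ∧ (fun ν : Kn u => x ν.1) = k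
      then fun μ => h.choose μ.1 else fun _ _ => false, fun x u => ?_⟩
    have hx : ∃ x', E x' = E x ∧ (fun ν : Kn u => x' ν.1) = fun ν => x ν.1 := ⟨x, rfl, rfl⟩
    obtain ⟨hcode, hside⟩ := hx.choose_spec
    simp only [dif_pos hx]
    exact funext fun μ => hE u _ x hcode (fun ν hν => congrFun hside ⟨ν, hν⟩) μ.1 μ.2

theorem Resolves.validCode {X Y : Type*} [Fintype X] [Fintype Y] {E : (I → X) → Y}
    (hE : Resolves W Kn E) {t ℓ : ℕ} (hX : Fintype.card X = 2 ^ t) (hY : Fintype.card Y = 2 ^ ℓ) :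
    ValidCode W Kn t ℓ := by
  have eX : (Fin t → Bool) ≃ X := Fintype.equivOfCardEq (by simp [hX])
  have eY : Y ≃ (Fin ℓ → Bool) := Fintype.equivOfCardEq (by simp [hY])
  refine validCode_iff_exists_resolves.2
    ⟨fun x => eY (E fun μ => eX (x μ)), fun u x x' hcode hKn μ hμ => ?_⟩
  exact eX.injective
    (hE u _ _ (eY.injective hcode) (fun ν hν => congrArg eX (hKn ν hν)) μ hμ)

theorem optRate_le_of_validCode {t ℓ : ℕ} (ht : 1 ≤ t) (h : ValidCode W Kn t ℓ) :
    optRate W Kn ≤ (ℓ : ℝ) / t := by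
  refine csInf_le ⟨0, ?_⟩ ⟨t, ℓ, ht, h, rfl⟩
  rintro ρ ⟨t', ℓ', -, -, rfl⟩
  positivity

theorem validCode_one_card [Fintype I] : ValidCode W Kn 1 (Fintype.card I) := by
  classical
  have huncoded : Resolves W Kn (id : (I → Bool) → I → Bool) :=
    fun _ _ _ h _ μ _ => congrFun h μ
  exact huncoded.validCode (by simp) (by simp)

section Acyclic

variable {S : Finset I} {β : Type*} [Preorder β] [WellFoundedLT β] {f : I → β}
  (hS : ∀ μ ∈ S, ∃ u, μ ∈ W u ∧ ∀ ν ∈ S, ν ∈ Kn u → f ν < f μ)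
include hS

theorem Resolves.eq_of_eqOn_compl {X Y : Type*} {E : (I → X) → Y} (hE : Resolves W Kn E)
    {x x' : I → X} (hcode : E x = E x') (hcompl : ∀ μ ∉ S, x μ = x' μ) : x = x' := by
  funext μ
  induction μ using (InvImage.wf f wellFounded_lt).induction with
  | _ μ ih =>
    by_cases hμ : μ ∈ S
    · obtain ⟨u, hW, hKn⟩ := hS μ hμ
      refine hE u x x' hcode (fun ν hν => ?_) μ hW
      by_cases hνS : ν ∈ S
      · exact ih ν (hKn ν hνS hν)
      · exact hcompl ν hνS
    · exact hcompl μ hμ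

theorem Resolves.card_pow_le {X Y : Type*} [Fintype X] [Nonempty X] [Fintype Y]
    {E : (I → X) → Y} (hE : Resolves W Kn E) : Fintype.card X ^ #S ≤ Fintype.card Y := by
  classical
  let extend : (S → X) → I → X :=
    fun y μ => if h : μ ∈ S then y ⟨μ, h⟩ else Classical.arbitrary X
  have hinj : Function.Injective fun y => E (extend y) := by
    intro y y' hcode
    have hext : extend y = extend y' :=
      hE.eq_of_eqOn_compl hS hcode fun μ hμ => by simp only [extend, dif_neg hμ]
    funext μ
    simpa [extend] using congrFun hext μ.1
  simpa using Fintype.card_le_of_injective _ hinj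

theorem ValidCode.card_mul_le {t ℓ : ℕ} (h : ValidCode W Kn t ℓ) : #S * t ≤ ℓ := by
  obtain ⟨E, hE⟩ := validCode_iff_exists_resolves.1 h
  have hcard := hE.card_pow_le hS
  simp only [Fintype.card_fun, Fintype.card_bool, Fintype.card_fin, ← pow_mul] at hcard
  rw [mul_comm]
  exact (Nat.pow_le_pow_iff_right one_lt_two).1 hcard

theorem card_le_optRate [Finite I] : (#S : ℝ) ≤ optRate W Kn := by
  cases nonempty_fintype I
  refine le_csInf ⟨_, 1, Fintype.card I, le_rfl, validCode_one_card, rfl⟩ ?_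
  rintro ρ ⟨t, ℓ, ht, h, rfl⟩
  rw [le_div_iff₀ (by exact_mod_cast ht)]
  exact_mod_cast h.card_mul_le hS

end Acyclic

end IndexCoding

section PowerSums

open Polynomial

theorem sum_mul_eval_eq_zero {R ι : Type*} [CommRing R] [Fintype ι] {d z : ι → R} {N : ℕ}
    (h : ∀ j < N, ∑ i, d i * z i ^ j = 0) {g : R[X]} (hg : g.natDegree < N) :
    ∑ i, d i * g.eval (z i) = 0 := by
  calc ∑ i, d i * g.eval (z i)
      = ∑ j ∈ range N, g.coeff j * ∑ i, d i * z i ^ j := by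
        simp only [eval_eq_sum_range' hg, mul_sum]
        rw [sum_comm]
        exact sum_congr rfl fun j _ => sum_congr rfl fun i _ => by ring
    _ = 0 := sum_eq_zero fun j hj => by rw [h j (mem_range.1 hj), mul_zero]

-- Test the power sums against the polynomial vanishing on `B` except at the node `z i₀`.
theorem eq_zero_of_sum_mul_pow_eq_zero {R ι : Type*} [CommRing R] [IsDomain R] [Fintype ι]
    {d z : ι → R} {N : ℕ} (h : ∀ j < N, ∑ i, d i * z i ^ j = 0) {B : Finset R} (hB : #B ≤ N)
    (hsupp : ∀ i, d i ≠ 0 → z i ∈ B) {i₀ : ι} (huniq : ∀ i, d i ≠ 0 → z i = z i₀ → i = i₀) :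
    d i₀ = 0 := by
  classical
  by_contra h₀
  have hmem := hsupp i₀ h₀
  let g : R[X] := Lagrange.nodal (B.erase (z i₀)) id
  have hdeg : g.natDegree < N := by
    rw [Lagrange.natDegree_nodal]
    exact (card_erase_lt_of_mem hmem).trans_le hB
  have hother : ∀ i ≠ i₀, d i * g.eval (z i) = 0 := by
    intro i hi
    by_cases hd : d i = 0
    · rw [hd, zero_mul]
    · have hz : z i ∈ B.erase (z i₀) := mem_erase.2 ⟨fun hz => hi (huniq i hd hz), hsupp i hd⟩
      rw [show g.eval (z i) = 0 from Lagrange.eval_nodal_at_node (v := id) hz, mul_zero]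
  have hg₀ : g.eval (z i₀) ≠ 0 :=
    Lagrange.eval_nodal_not_at_node fun b hb => (ne_of_mem_erase hb).symm
  have hsum := sum_mul_eval_eq_zero h hdeg
  rw [Fintype.sum_eq_single i₀ hother] at hsum
  exact mul_ne_zero h₀ hg₀ hsum

end PowerSums

section LabelledCode

variable {I U : Type} {W Kn : U → Set I} {l N : ℕ}

/-- The Vandermonde encoder: symbol `q` of message `μ` is placed at the node `z μ q`, and the
codeword consists of the first `N` power sums. -/
def powerSumEncoder {R : Type*} [CommRing R] [Fintype I] (N : ℕ)
    (z : I → Fin l → R) (x : I → Fin l → R) : Fin N → R :=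
  fun j => ∑ p : I × Fin l, x p.1 p.2 * z p.1 p.2 ^ (j : ℕ)

theorem resolves_powerSumEncoder {R : Type*} [CommRing R] [IsDomain R] [Fintype I]
    {z : I → Fin l → R}
    (hsep : ∀ u, ∀ μ₀ ∈ W u, ∀ q₀, ∀ μ ∉ Kn u, ∀ q, z μ q = z μ₀ q₀ → μ = μ₀ ∧ q = q₀)
    {B : U → Finset R} (hB : ∀ u, #(B u) ≤ N) (hmem : ∀ u, ∀ μ ∉ Kn u, ∀ q, z μ q ∈ B u) :
    Resolves W Kn (powerSumEncoder N z) := by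
  intro u x x' hcode hKn μ₀ hμ₀
  funext q₀
  have hpow : ∀ j < N, ∑ p : I × Fin l, (x p.1 p.2 - x' p.1 p.2) * z p.1 p.2 ^ j = 0 := by
    intro j hj
    simpa only [powerSumEncoder, sub_mul, sum_sub_distrib, sub_eq_zero]
      using congrFun hcode ⟨j, hj⟩
  have hunknown : ∀ p : I × Fin l, x p.1 p.2 - x' p.1 p.2 ≠ 0 → p.1 ∉ Kn u := fun p hp hk =>
    hp (by rw [hKn p.1 hk, sub_self])
  refine sub_eq_zero.1 <| eq_zero_of_sum_mul_pow_eq_zero (i₀ := (μ₀, q₀)) hpow (hB u)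
    (fun p hp => hmem u p.1 (hunknown p hp) p.2) fun p hp hz => ?_
  obtain ⟨hμ, hq⟩ := hsep u μ₀ hμ₀ q₀ p.1 (hunknown p hp) p.2 hz
  exact Prod.ext hμ hq

variable {P : Type*} [Finite I] [Finite P] {pos : I → Fin l → P}
  (hsep : ∀ u, ∀ μ₀ ∈ W u, ∀ q₀, ∀ μ ∉ Kn u, ∀ q, pos μ q = pos μ₀ q₀ → μ = μ₀ ∧ q = q₀)
  {B : U → Finset P} (hB : ∀ u, #(B u) ≤ N) (hmem : ∀ u, ∀ μ ∉ Kn u, ∀ q, pos μ q ∈ B u)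
include hsep hB hmem

theorem exists_validCode_of_labelling : ∃ r, 1 ≤ r ∧ ValidCode W Kn (l * r) (N * r) := by
  classical
  cases nonempty_fintype I
  cases nonempty_fintype P
  let r := Fintype.card P + 1
  let F := GaloisField 2 r
  let _ : Fintype F := Fintype.ofFinite F
  have hF : Fintype.card F = 2 ^ r := by
    rw [← Nat.card_eq_fintype_card]
    exact GaloisField.card 2 r (Nat.succ_ne_zero _)
  obtain ⟨ω⟩ : Nonempty (P ↪ F) := Function.Embedding.nonempty_of_card_le <|
    hF ▸ (Nat.le_succ _).trans Nat.lt_two_pow_self.le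
  have hresolves : Resolves W Kn (powerSumEncoder N fun μ q => ω (pos μ q)) :=
    resolves_powerSumEncoder (B := fun u => (B u).map ω)
      (fun u μ₀ hμ₀ q₀ μ hμ q h => hsep u μ₀ hμ₀ q₀ μ hμ q (ω.injective h))
      (fun u => (card_map ω).trans_le (hB u))
      fun u μ hμ q => mem_map_of_mem ω (hmem u μ hμ q)
  exact ⟨r, Nat.le_add_left 1 _,
    hresolves.validCode (by simp [hF, ← pow_mul, mul_comm]) (by simp [hF, ← pow_mul, mul_comm])⟩

theorem optRate_le_of_labelling (hl : 1 ≤ l) : optRate W Kn ≤ (N : ℝ) / l := by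
  obtain ⟨r, hr, hcode⟩ := exists_validCode_of_labelling hsep hB hmem
  have hr₀ : (r : ℝ) ≠ 0 := by positivity
  have hrate := optRate_le_of_validCode (Nat.mul_pos hl hr) hcode
  rwa [Nat.cast_mul, Nat.cast_mul, mul_div_mul_right _ _ hr₀] at hrate

end LabelledCode

section PeriodicSums

variable {M : Type*} [AddCommMonoid M] {f : ℕ → M} {p : ℕ}

theorem sum_range_add_of_periodic (hf : Function.Periodic f p) (n : ℕ) :
    ∑ j ∈ range (n + p), f j = ∑ j ∈ range n, f j + ∑ j ∈ range p, f j := by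
  rw [add_comm n p, sum_range_add, add_comm]
  congr 1
  exact sum_congr rfl fun j _ => by rw [add_comm, hf]

theorem sum_range_mul_of_periodic (hf : Function.Periodic f p) (k : ℕ) :
    ∑ j ∈ range (k * p), f j = k • ∑ j ∈ range p, f j := by
  induction k with
  | zero => simp
  | succ k ih => rw [Nat.succ_mul, sum_range_add_of_periodic hf, ih, succ_nsmul]

end PeriodicSums

section Blocks

variable (α : ℕ → ℕ) (L : ℕ)

/-- Left end of the `n`-th block when the line is cut into consecutive blocks, the `n`-th one made
of `L` points carrying side information followed by a gap of `α n` points. -/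
def blockStart (n : ℕ) : ℕ := ∑ j ∈ range n, (α j + L)

/-- Residues modulo `K` of the points carrying side information in the `i - 1` blocks preceding
the `s`-th. With `s ≡ t` modulo `m`, user `k` knows the message `(b, t)` iff
`k - b + blockStart α L s` is one of them. -/
def knownPhases (i K s : ℕ) : Set (ZMod K) :=
  {z | ∃ n < s, s < n + i ∧ ∃ x < L, z = (blockStart α L n + x : ℕ)}

/-- Residues that can be missing from `knownPhases` for some `s` in the window
`(c + i, c + 2 * i]`: the left ends of the blocks of the window and the gap points of the blocks
`c + 1, …, c + 2 * i - 1`. -/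
def unknownPhases (i K c : ℕ) : Finset (ZMod K) :=
  (Ioc (c + i) (c + 2 * i)).image (fun s => (blockStart α L s : ZMod K)) ∪
    (Ico (c + 1) (c + 2 * i)).biUnion fun n =>
      (range (α n)).image fun x => ((blockStart α L n + L + x : ℕ) : ZMod K)

theorem blockStart_succ (n : ℕ) : blockStart α L (n + 1) = blockStart α L n + α n + L := by
  rw [blockStart, sum_range_succ, ← add_assoc]
  rfl

theorem blockStart_mono : Monotone (blockStart α L) :=
  monotone_nat_of_le_succ fun n => by rw [blockStart_succ]; omega

theorem blockStart_eq_sum_add (n : ℕ) : blockStart α L n = ∑ j ∈ range n, α j + n * L := by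
  simp [blockStart, sum_add_distrib]

theorem exists_mem_block {s₀ s y : ℕ} (h₀ : blockStart α L s₀ ≤ y) (h : y < blockStart α L s) :
    ∃ n, s₀ ≤ n ∧ n < s ∧ blockStart α L n ≤ y ∧ y < blockStart α L (n + 1) := by
  have hlt : s₀ < s := (blockStart_mono α L).reflect_lt (h₀.trans_lt h)
  let P : ℕ → Prop := fun n => blockStart α L n ≤ y
  let n := Nat.findGreatest P s
  have hn : P n := Nat.findGreatest_spec hlt.le h₀
  have hns : n < s := (blockStart_mono α L).reflect_lt (hn.trans_lt h)
  exact ⟨n, Nat.le_findGreatest hlt.le h₀, hns, hn,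
    not_le.1 (Nat.findGreatest_is_greatest (P := P) n.lt_succ_self hns)⟩

theorem sum_Icc_sub_add_blockStart {s v : ℕ} (hv : v ≤ s) :
    ∑ j ∈ Icc 1 v, α (s - j) + v * L + blockStart α L (s - v) = blockStart α L s := by
  induction v with
  | zero => simp
  | succ v ih =>
    have hsv : s - v = s - (v + 1) + 1 := by omega
    rw [← ih (Nat.le_of_succ_le hv), sum_Icc_succ_top (by omega), hsv, blockStart_succ]
    ring

section Period

variable {α L} {i K : ℕ} (hα : Function.Periodic α i) (hK : blockStart α L i + 1 = K + L)
include hα hK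

theorem blockStart_add_period (n : ℕ) :
    blockStart α L (n + i) + 1 = blockStart α L n + K + L := by
  have hadd : blockStart α L (n + i) = blockStart α L n + blockStart α L i :=
    sum_range_add_of_periodic (fun j => congrArg (· + L) (hα j)) n
  omega

theorem blockStart_mem_knownPhases (hL : 1 ≤ L) {s s₀ : ℕ} (hne : s ≠ s₀) (h₁ : s₀ < s + i)
    (h₂ : s < s₀ + i) (hi : i ≤ s₀) : (blockStart α L s₀ : ZMod K) ∈ knownPhases α L i K s := by
  rcases hne.lt_or_gt with h | h
  · refine ⟨s₀ - i, by omega, by omega, L - 1, by omega, ?_⟩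
    have hper := blockStart_add_period hα hK (s₀ - i)
    rw [Nat.sub_add_cancel hi] at hper
    rw [show blockStart α L s₀ = blockStart α L (s₀ - i) + (L - 1) + K by omega]
    simp
  · exact ⟨s₀, h, h₂, 0, hL, rfl⟩

theorem natCast_add_blockStart_notMem_knownPhases {s e : ℕ} (hi : i ≤ s) (he : e ≤ α s) :
    ((e + blockStart α L s : ℕ) : ZMod K) ∉ knownPhases α L i K s := by
  rintro ⟨n, hns, hsn, x, hx, hz⟩
  have hper := blockStart_add_period hα hK (s - i)
  have hαs := hα (s - i)
  rw [Nat.sub_add_cancel hi] at hper hαs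
  have hsucc := blockStart_succ α L (s - i)
  have hlow : blockStart α L (s - i + 1) ≤ blockStart α L n := blockStart_mono α L (by omega)
  have hhigh : blockStart α L (n + 1) ≤ blockStart α L s := blockStart_mono α L hns
  rw [blockStart_succ] at hhigh
  have heq := ((ZMod.natCast_eq_natCast_iff _ _ _).1 hz).eq_of_abs_lt (abs_lt.2 (by omega))
  omega

-- The `K` consecutive points from `blockStart α L (s - i) + L` up to `blockStart α L s` represent
-- every residue; those below the last lie in a gap or carry side information.
theorem eq_or_exists_of_notMem_knownPhases [NeZero K] {s : ℕ} (hi : i ≤ s) {z : ZMod K}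
    (hz : z ∉ knownPhases α L i K s) :
    z = blockStart α L s ∨
      ∃ n < s, s ≤ n + i ∧ ∃ x < α n, z = (blockStart α L n + L + x : ℕ) := by
  have hper := blockStart_add_period hα hK (s - i)
  rw [Nat.sub_add_cancel hi] at hper
  obtain ⟨y, hy, hlow, hhigh⟩ : ∃ y : ℕ, (y : ZMod K) = z ∧ blockStart α L (s - i) + L ≤ y ∧
      y ≤ blockStart α L s := by
    have hd := ZMod.val_lt ((blockStart α L s : ZMod K) - z)
    refine ⟨blockStart α L s - ((blockStart α L s : ZMod K) - z).val, ?_, by omega, by omega⟩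
    rw [Nat.cast_sub (by omega), ZMod.natCast_zmod_val, sub_sub_cancel]
  rcases hhigh.eq_or_lt with rfl | hlt
  · exact .inl hy.symm
  · right
    obtain ⟨n, hn, hns, hny, hyn⟩ := exists_mem_block α L (le_of_add_le_left hlow) hlt
    rw [blockStart_succ] at hyn
    by_cases hgap : blockStart α L n + L ≤ y
    · refine ⟨n, hns, by omega, y - (blockStart α L n + L), by omega, ?_⟩
      rw [Nat.add_sub_cancel' hgap, hy]
    · have hne : n ≠ s - i := by
        rintro rfl
        exact hgap hlow
      refine absurd ⟨n, hns, by omega, y - blockStart α L n, by omega, ?_⟩ hz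
      rw [Nat.add_sub_cancel' hny, hy]

theorem mem_unknownPhases_of_notMem_knownPhases [NeZero K] {c s : ℕ}
    (hs : s ∈ Ioc (c + i) (c + 2 * i)) {z : ZMod K} (hz : z ∉ knownPhases α L i K s) :
    z ∈ unknownPhases α L i K c := by
  rw [unknownPhases, mem_union]
  obtain ⟨hs₁, hs₂⟩ := mem_Ioc.1 hs
  rcases eq_or_exists_of_notMem_knownPhases hα hK (by omega) hz with h | ⟨n, hn, hi, x, hx, h⟩
  · exact .inl (mem_image.2 ⟨s, hs, h.symm⟩)
  · exact .inr (mem_biUnion.2 ⟨n, mem_Ico.2 ⟨by omega, by omega⟩,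
      mem_image.2 ⟨x, mem_range.2 hx, h.symm⟩⟩)

end Period

theorem card_unknownPhases_add_le {i : ℕ} (hα : Function.Periodic α i) (hi : 1 ≤ i) (K c : ℕ) :
    #(unknownPhases α L i K c) + α c ≤ i + 2 * ∑ j ∈ range i, α j := by
  have hends : #((Ioc (c + i) (c + 2 * i)).image fun s => (blockStart α L s : ZMod K)) ≤ i :=
    card_image_le.trans_eq (by rw [Nat.card_Ioc]; omega)
  have hgaps : #((Ico (c + 1) (c + 2 * i)).biUnion fun n =>
      (range (α n)).image fun x => ((blockStart α L n + L + x : ℕ) : ZMod K)) ≤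
      ∑ n ∈ Ico (c + 1) (c + 2 * i), α n :=
    card_biUnion_le.trans <| sum_le_sum fun n _ => card_image_le.trans_eq (card_range _)
  have hwindow : ∑ n ∈ Ico (c + 1) (c + 2 * i), α n + α c = 2 * ∑ j ∈ range i, α j := by
    have htwo : Function.Periodic α (2 * i) := hα.nat_mul 2
    have hrange := sum_range_add_of_periodic htwo c
    rw [← sum_range_add_sum_Ico _ (Nat.le_add_right c (2 * i)),
      sum_eq_sum_Ico_succ_bot (by omega), sum_range_mul_of_periodic hα, smul_eq_mul] at hrange
    omega
  have hunion : #(unknownPhases α L i K c) ≤ _ := card_union_le _ _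
  omega

end Blocks

section Residues

variable {n : ℕ}

theorem angMod_congr {x y : ℤ} (h : (x : ZMod n) = y) : angMod x n = angMod y n := by
  rw [angMod, angMod, (ZMod.intCast_eq_intCast_iff x y n).1 h]

theorem angMod_mem_Icc (hn : n ≠ 0) (x : ℤ) : angMod x n ∈ Icc 1 n := by
  have hnonneg : 0 ≤ x % n := Int.emod_nonneg x (by omega)
  have hlt : x % n < n := Int.emod_lt_of_pos x (by omega)
  rw [angMod, mem_Icc]
  split_ifs <;> omega

theorem natCast_angMod (hn : n ≠ 0) (x : ℤ) : (angMod x n : ZMod n) = x := by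
  have hnonneg : 0 ≤ x % n := Int.emod_nonneg x (by omega)
  rw [angMod]
  split_ifs with h
  · rw [ZMod.natCast_self, eq_comm, ZMod.intCast_zmod_eq_zero_iff_dvd]
    exact Int.dvd_of_emod_eq_zero h
  · rw [← Int.cast_natCast, Int.toNat_of_nonneg hnonneg, ZMod.intCast_mod]

theorem eq_of_natCast_zmod_eq {b c : ℕ} (hb : b ∈ Icc 1 n) (hc : c ∈ Icc 1 n)
    (h : (b : ZMod n) = c) : b = c := by
  rw [mem_Icc] at hb hc
  exact ((ZMod.natCast_eq_natCast_iff b c n).1 h).eq_of_abs_lt (abs_lt.2 (by omega))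

theorem eq_angMod_iff {b : ℕ} (hb : b ∈ Icc 1 n) (x : ℤ) : b = angMod x n ↔ (b : ZMod n) = x := by
  have hn : n ≠ 0 := by
    rw [mem_Icc] at hb
    omega
  refine ⟨fun h => h ▸ natCast_angMod hn x, fun h => ?_⟩
  exact eq_of_natCast_zmod_eq hb (angMod_mem_Icc hn x) (h.trans (natCast_angMod hn x).symm)

end Residues

section CyclicSeq

/-- The sequence `n ↦ a_{<n>_m}`, the `m`-periodic extension of `a_1, …, a_m`. -/
def cyclicSeq (m : ℕ) (a : ℕ → ℕ) (n : ℕ) : ℕ := a (angMod n m)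

variable {m : ℕ} (a : ℕ → ℕ)

theorem cyclicSeq_of_mem {t : ℕ} (ht : t ∈ Icc 1 m) : cyclicSeq m a t = a t :=
  congrArg a ((eq_angMod_iff ht t).2 (by simp)).symm

theorem cyclicSeq_congr {s t : ℕ} (h : (s : ZMod m) = t) :
    cyclicSeq m a s = cyclicSeq m a t :=
  congrArg a (angMod_congr (by simpa using h))

variable (m)

theorem periodic_cyclicSeq : Function.Periodic (cyclicSeq m a) m :=
  fun n => cyclicSeq_congr a (by simp)

theorem periodic_cyclicSeq_mul (l : ℕ) : Function.Periodic (cyclicSeq m a) (l * m) :=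
  (periodic_cyclicSeq m a).nat_mul l

theorem sum_range_cyclicSeq : ∑ j ∈ range m, cyclicSeq m a j = ∑ k ∈ Icc 1 m, a k := by
  have hshift : ∑ j ∈ range m, cyclicSeq m a j = ∑ j ∈ range m, cyclicSeq m a (j + 1) := by
    have hm₀ : cyclicSeq m a m = cyclicSeq m a 0 := (periodic_cyclicSeq m a).eq
    have h := sum_range_succ' (cyclicSeq m a) m
    rw [sum_range_succ] at h
    omega
  calc ∑ j ∈ range m, cyclicSeq m a j
      = ∑ j ∈ range m, cyclicSeq m a (j + 1) := hshift
    _ = ∑ k ∈ Icc 1 m, cyclicSeq m a k := by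
        rw [range_eq_Ico, sum_Ico_add' (cyclicSeq m a) 0 m 1]
        rfl
    _ = ∑ k ∈ Icc 1 m, a k := sum_congr rfl fun k hk => cyclicSeq_of_mem a hk

theorem blockStart_cyclicSeq_add_one {l L K : ℕ} (hi : 1 ≤ l * m)
    (hK : K = l * (∑ k ∈ Icc 1 m, a k) + (l * m - 1) * L + 1) :
    blockStart (cyclicSeq m a) L (l * m) + 1 = K + L := by
  have hlast : l * m * L = (l * m - 1) * L + L := by
    rw [← Nat.succ_mul, Nat.succ_eq_add_one, Nat.sub_add_cancel hi]
  rw [blockStart_eq_sum_add, sum_range_mul_of_periodic (periodic_cyclicSeq m a),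
    sum_range_cyclicSeq, smul_eq_mul]
  omega

variable {m a}

theorem mem_knownIdxT_iff {K i L k b t s : ℕ} (hb : b ∈ Icc 1 K) (ht : t ∈ Icc 1 m)
    (hs : (s : ZMod m) = t) (hi : i ≤ s) :
    (b, t) ∈ knownIdxT K m i L a k ↔
      (k - b + blockStart (cyclicSeq m a) L s : ZMod K) ∈
        knownPhases (cyclicSeq m a) L i K s := by
  have hphase : ∀ v ≤ s, ∀ r ≤ L,
      b = angMod (k + (∑ j ∈ Icc 1 v, (a (angMod ((m : ℤ) + t - j) m) : ℤ))
        + ((v : ℤ) - 1) * L + r) K ↔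
      (k - b + blockStart (cyclicSeq m a) L s : ZMod K) =
        (blockStart (cyclicSeq m a) L (s - v) + (L - r) : ℕ) := by
    intro v hv r hr
    have hsum : ∑ j ∈ Icc 1 v, (a (angMod ((m : ℤ) + t - j) m) : ℤ) =
        ∑ j ∈ Icc 1 v, (cyclicSeq m a (s - j) : ℤ) := by
      refine sum_congr rfl fun j hj => congrArg _ (congrArg a (angMod_congr ?_))
      rw [Nat.cast_sub ((mem_Icc.1 hj).2.trans hv)]
      push_cast
      rw [ZMod.natCast_self, zero_add, hs]
    rw [hsum, eq_angMod_iff hb, ← sum_Icc_sub_add_blockStart (cyclicSeq m a) L hv]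
    push_cast [Nat.cast_sub hr]
    constructor <;> intro h <;> linear_combination -h
  constructor
  · rintro ⟨t', -, v, hv, r, hr, rfl : t = t', h⟩
    rw [mem_Icc] at hv hr
    exact ⟨s - v, by omega, by omega, L - r, by omega, (hphase v (by omega) r hr.2).1 h⟩
  · rintro ⟨n, hns, hsn, x, hx, h⟩
    refine ⟨t, ht, s - n, mem_Icc.2 (by omega), L - x, mem_Icc.2 (by omega), rfl, ?_⟩
    refine (hphase (s - n) (by omega) (L - x) (by omega)).2 ?_
    rwa [Nat.sub_sub_self hns.le, Nat.sub_sub_self hx.le]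

end CyclicSeq

section CopyIndex

variable {m l c : ℕ}

/-- The `q`-th integer congruent to `t` modulo `m` in the window `(c + l * m, c + 2 * (l * m)]`;
it indexes the block attached to the `q`-th symbol of the messages `(b, t)`. -/
def copyIndex (m l c t q : ℕ) : ℕ := c + angMod ((t : ℤ) - c) m + m * (l + q)

theorem natCast_copyIndex (hm : m ≠ 0) (t q : ℕ) : (copyIndex m l c t q : ZMod m) = t := by
  simp [copyIndex, natCast_angMod hm]

theorem copyIndex_mem_Ioc (hm : m ≠ 0) (t : ℕ) {q : ℕ} (hq : q < l) :
    copyIndex m l c t q ∈ Ioc (c + l * m) (c + 2 * (l * m)) := by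
  obtain ⟨hpos, hle⟩ := mem_Icc.1 (angMod_mem_Icc hm ((t : ℤ) - c))
  have hq' : m * (q + 1) ≤ m * l := Nat.mul_le_mul_left m hq
  rw [mul_add, mul_one] at hq'
  rw [copyIndex, mem_Ioc, mul_add, mul_comm l m]
  omega

theorem copyIndex_inj {t t' q q' : ℕ} (ht : t ∈ Icc 1 m) (ht' : t' ∈ Icc 1 m)
    (h : copyIndex m l c t q = copyIndex m l c t' q') : t = t' ∧ q = q' := by
  have hm : 0 < m := (mem_Icc.1 ht).1.trans (mem_Icc.1 ht).2
  obtain rfl : t = t' := eq_of_natCast_zmod_eq ht ht' <| by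
    rw [← natCast_copyIndex hm.ne' t q, h, natCast_copyIndex hm.ne']
  exact ⟨rfl, Nat.add_left_cancel (Nat.eq_of_mul_eq_mul_left hm (Nat.add_left_cancel h))⟩

end CopyIndex

section TildeICP

variable {m l L K : ℕ} {a : ℕ → ℕ}

instance (K m : ℕ) : Finite (Msg K m) :=
  ((Icc 1 K ×ˢ Icc 1 m).finite_toSet.subset fun _ h => mem_product.2 h).to_subtype

theorem mem_tildeKnown_iff {i s : ℕ} {u : User K} {μ : Msg K m} (hs : (s : ZMod m) = μ.1.2)
    (hi : i ≤ s) :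
    μ ∈ tildeKnown K m i L a u ↔
      (u.1 - μ.1.1 + blockStart (cyclicSeq m a) L s : ZMod K) ∈
        knownPhases (cyclicSeq m a) L i K s :=
  mem_knownIdxT_iff μ.2.1 μ.2.2 hs hi

/-- Label of the `q`-th symbol of the message `μ`: with `s` the index of that symbol in the window
`(c + l * m, c + 2 * (l * m)]`, user `k` knows `μ` iff `k + symbolLabel a L c μ q` belongs to
`knownPhases (cyclicSeq m a) L (l * m) K s`. -/
def symbolLabel (a : ℕ → ℕ) (L c : ℕ) (μ : Msg K m) (q : Fin l) : ZMod K :=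
  blockStart (cyclicSeq m a) L (copyIndex m l c μ.1.2 q) - μ.1.1

theorem mem_tildeKnown_iff_symbolLabel (hm : m ≠ 0) (c : ℕ) {u : User K} (μ : Msg K m)
    (q : Fin l) :
    μ ∈ tildeKnown K m (l * m) L a u ↔
      (u.1 + symbolLabel a L c μ q : ZMod K) ∈
        knownPhases (cyclicSeq m a) L (l * m) K (copyIndex m l c μ.1.2 q) := by
  have hs := (mem_Ioc.1 (copyIndex_mem_Ioc (c := c) hm μ.1.2 q.2)).1
  rw [mem_tildeKnown_iff (s := copyIndex m l c μ.1.2 q) (natCast_copyIndex hm μ.1.2 q) (by omega),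
    symbolLabel, ← add_sub_assoc, sub_add_eq_add_sub]

theorem card_filter_le_fst_add (hK : ∀ t ∈ Icc 1 m, a t < K) :
    #{p ∈ Icc 1 K ×ˢ Icc 1 m | K ≤ p.1 + a p.2} = ∑ t ∈ Icc 1 m, (a t + 1) := by
  rw [card_filter, sum_product_right]
  refine sum_congr rfl fun t ht => ?_
  have hlast : {b ∈ Icc 1 K | K ≤ b + a t} = Icc (K - a t) K := by
    ext b
    have := hK t ht
    simp only [mem_filter, mem_Icc]
    omega
  have := hK t ht
  rw [← card_filter, hlast, Nat.card_Icc]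
  omega

variable (hK : blockStart (cyclicSeq m a) L (l * m) + 1 = K + L)
include hK

theorem lt_of_mem_tildeKnown {u : User K} {μ : Msg K m}
    (hμ : μ ∈ tildeKnown K m (l * m) L a u) (hle : u.1 ≤ μ.1.1 + a μ.1.2) : u.1 < μ.1.1 := by
  by_contra! hμu
  have hper := periodic_cyclicSeq_mul m a l
  have hs : ((μ.1.2 + l * m : ℕ) : ZMod m) = μ.1.2 := by simp
  have hα : cyclicSeq m a (μ.1.2 + l * m) = a μ.1.2 := by
    rw [hper, cyclicSeq_of_mem a μ.2.2]
  refine natCast_add_blockStart_notMem_knownPhases hper hK (e := u.1 - μ.1.1)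
    (Nat.le_add_left (l * m) μ.1.2) (by omega) ?_
  have hmem := (mem_tildeKnown_iff hs (Nat.le_add_left _ _)).1 hμ
  rwa [← Nat.cast_sub hμu, ← Nat.cast_add] at hmem

theorem sum_le_optRate_tilde (haK : ∀ t ∈ Icc 1 m, a t < K) :
    ∑ t ∈ Icc 1 m, ((a t : ℝ) + 1) ≤
      optRate (tildeWant K m) (tildeKnown K m (l * m) L a) := by
  classical
  let S : Finset (Msg K m) := {p ∈ Icc 1 K ×ˢ Icc 1 m | K ≤ p.1 + a p.2}.subtype _
  have hcard : #S = ∑ t ∈ Icc 1 m, (a t + 1) := by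
    rw [card_subtype, filter_true_of_mem fun p hp => mem_product.1 (mem_filter.1 hp).1,
      card_filter_le_fst_add haK]
  have hbound := card_le_optRate (W := tildeWant K m) (Kn := tildeKnown K m (l * m) L a)
    (S := S) (f := fun μ => K - μ.1.1) fun μ _ => by
      refine ⟨⟨μ.1.1, μ.2.1⟩, rfl, fun ν hν hknown => ?_⟩
      have hνS := (mem_filter.1 (mem_subtype.1 hν)).2
      have hμK := (mem_Icc.1 μ.2.1).2
      have hνK := (mem_Icc.1 ν.2.1).2
      have hlt := lt_of_mem_tildeKnown hK hknown (hμK.trans hνS)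
      exact Nat.sub_lt_sub_left (hlt.trans_le hνK) hlt
  rw [hcard] at hbound
  exact_mod_cast hbound

theorem eq_of_symbolLabel_eq (hm : m ≠ 0) (hL : 1 ≤ L) {c : ℕ} {u : User K} {μ μ₀ : Msg K m}
    {q q₀ : Fin l} (hμ₀ : μ₀ ∈ tildeWant K m u) (hμ : μ ∉ tildeKnown K m (l * m) L a u)
    (hlabel : symbolLabel a L c μ q = symbolLabel a L c μ₀ q₀) : μ = μ₀ ∧ q = q₀ := by
  let s := copyIndex m l c μ.1.2 q
  let s₀ := copyIndex m l c μ₀.1.2 q₀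
  have hs : s = s₀ := by
    by_contra hne
    obtain ⟨hs₁, hs₂⟩ := mem_Ioc.1 (copyIndex_mem_Ioc (c := c) hm μ.1.2 q.2)
    obtain ⟨hs₁', hs₂'⟩ := mem_Ioc.1 (copyIndex_mem_Ioc (c := c) hm μ₀.1.2 q₀.2)
    have hphase : (u.1 + symbolLabel a L c μ q : ZMod K) = blockStart (cyclicSeq m a) L s₀ := by
      rw [hlabel, ← show μ₀.1.1 = u.1 from hμ₀, symbolLabel, add_sub_cancel]
    refine hμ ((mem_tildeKnown_iff_symbolLabel hm c μ q).2 (hphase ▸ ?_))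
    exact blockStart_mem_knownPhases (periodic_cyclicSeq_mul m a l) hK hL hne (by omega)
      (by omega) (by omega)
  obtain ⟨ht, hq⟩ := copyIndex_inj μ.2.2 μ₀.2.2 hs
  have hb : μ.1.1 = μ₀.1.1 := eq_of_natCast_zmod_eq μ.2.1 μ₀.2.1 <| by
    rw [symbolLabel, symbolLabel, show copyIndex m l c μ.1.2 q = _ from hs] at hlabel
    exact sub_right_injective hlabel
  exact ⟨Subtype.ext (Prod.ext hb ht), Fin.ext hq⟩

theorem optRate_tilde_le_card_div [NeZero K] (hm : m ≠ 0) (hl : 1 ≤ l) (hL : 1 ≤ L) (c : ℕ)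
    {B : Finset (ZMod K)} (hB : ∀ s ∈ Ioc (c + l * m) (c + 2 * (l * m)),
      ∀ z ∉ knownPhases (cyclicSeq m a) L (l * m) K s, z ∈ B) :
    optRate (tildeWant K m) (tildeKnown K m (l * m) L a) ≤ (#B : ℝ) / l := by
  classical
  refine optRate_le_of_labelling (pos := symbolLabel a L c)
    (B := fun u => B.image (· - (u.1 : ZMod K)))
    (fun u μ₀ hμ₀ q₀ μ hμ q => eq_of_symbolLabel_eq hK hm hL hμ₀ hμ) (fun u => card_image_le)
    (fun u μ hμ q => ?_) hl
  have hphase := hB _ (copyIndex_mem_Ioc hm μ.1.2 q.2) _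
    (mt (mem_tildeKnown_iff_symbolLabel hm c μ q).2 hμ)
  exact mem_image.2 ⟨_, hphase, add_sub_cancel_left _ _⟩

theorem optRate_tilde_le_div [NeZero K] (hm : m ≠ 0) (hl : 1 ≤ l) (hL : 1 ≤ L) :
    optRate (tildeWant K m) (tildeKnown K m (l * m) L a) ≤ (K : ℝ) / l := by
  simpa using optRate_tilde_le_card_div hK hm hl hL 0 fun _ _ z _ => mem_univ z

theorem optRate_tilde_le_gaps_div [NeZero K] (hm : m ≠ 0) (hl : 1 ≤ l) (hL : 1 ≤ L) {c : ℕ}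
    (hc : c ∈ Icc 1 m) :
    optRate (tildeWant K m) (tildeKnown K m (l * m) L a) ≤
      ((l * m : ℕ) + 2 * (l * ∑ k ∈ Icc 1 m, a k : ℕ) - a c : ℝ) / l := by
  have hper := periodic_cyclicSeq_mul m a l
  have hcard := card_unknownPhases_add_le (cyclicSeq m a) L hper
    (Nat.mul_pos hl (Nat.pos_of_ne_zero hm)) K c
  rw [sum_range_mul_of_periodic (periodic_cyclicSeq m a), sum_range_cyclicSeq,
    cyclicSeq_of_mem a hc, smul_eq_mul] at hcard
  have hrate := optRate_tilde_le_card_div hK hm hl hL c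
    fun s hs z hz => mem_unknownPhases_of_notMem_knownPhases hper hK hs hz
  refine hrate.trans (div_le_div_of_nonneg_right ?_ (Nat.cast_nonneg l))
  rw [le_sub_iff_add_le]
  exact_mod_cast hcard

end TildeICP

theorem stmt11_general (m l L : ℕ) (hm : 1 ≤ m) (hl : 1 ≤ l) (hL : 1 ≤ L) (a : ℕ → ℕ)
    (c : ℕ) (hc : c ∈ Finset.Icc 1 m) (i : ℕ) (hi : i = l * m)
    (K : ℕ) (hK : K = l * (∑ k ∈ Finset.Icc 1 m, a k) + (i - 1) * L + 1) :
    (∑ t ∈ Finset.Icc 1 m, ((a t : ℝ) + 1)) ≤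
        optRate (tildeWant K m) (tildeKnown K m i L a) ∧
    optRate (tildeWant K m) (tildeKnown K m i L a) ≤
      (1 / (l : ℝ)) *
        min (2 * ((K : ℝ) - ((i : ℝ) - 1) * (L : ℝ)) + (i : ℝ) - 2 - (a c : ℝ)) (K : ℝ) := by
  subst hi
  have hm₀ : m ≠ 0 := Nat.one_le_iff_ne_zero.1 hm
  have hi₁ : 1 ≤ l * m := Nat.mul_pos hl hm
  have hblock := blockStart_cyclicSeq_add_one m a hi₁ hK
  have : NeZero K := ⟨by omega⟩
  refine ⟨sum_le_optRate_tilde hblock fun t ht => ?_, ?_⟩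
  · have hat : a t ≤ l * ∑ k ∈ Icc 1 m, a k :=
      (single_le_sum_of_canonicallyOrdered ht).trans (Nat.le_mul_of_pos_left _ hl)
    omega
  · have hl₀ : (0 : ℝ) < l := by exact_mod_cast hl
    have hK' : (K : ℝ) = (l * ∑ k ∈ Icc 1 m, a k : ℕ) + (((l * m : ℕ) : ℝ) - 1) * L + 1 := by
      rw [hK]
      push_cast [Nat.cast_sub hi₁]
      ring
    rw [one_div_mul_eq_div, ← min_div_div_right hl₀.le]
    refine le_min ?_ (optRate_tilde_le_div hblock hm₀ hl hL)
    refine (optRate_tilde_le_gaps_div hblock hm₀ hl hL hc).trans_eq ?_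
    rw [hK']
    ring

/-- Lemma 10 of the paper: bounds on the optimal broadcast rate
of the tilde-`((a_m,…,a_1)×l)_L`-ICP:
`Σ_{t=1}^{m}(a_t+1) ≤ R* ≤ (1/l)·min{2(K−(i−1)L)+i−2−a_m, K}`. -/
theorem stmt11 (m l L : ℕ) (hm : 1 ≤ m) (hl : 1 ≤ l) (hL : 1 ≤ L) (a : ℕ → ℕ)
    (hmax : ∀ k ∈ Finset.Icc 1 m, a k ≤ a m)
    (i : ℕ) (hi : i = l * m)
    (K : ℕ) (hK : K = l * (∑ k ∈ Finset.Icc 1 m, a k) + (i - 1) * L + 1) :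
    (∑ t ∈ Finset.Icc 1 m, ((a t : ℝ) + 1)) ≤
        optRate (tildeWant K m) (tildeKnown K m i L a) ∧
    optRate (tildeWant K m) (tildeKnown K m i L a) ≤
      (1 / (l : ℝ)) *
        min (2 * ((K : ℝ) - ((i : ℝ) - 1) * (L : ℝ)) + (i : ℝ) - 2 - (a m : ℝ)) (K : ℝ) :=
  stmt11_general m l L hm hl hL a m (Finset.mem_Icc.2 ⟨hm, le_rfl⟩) i hi K hK
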